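/- Let k ≥ 1 and let ρ : {1,...,k} → {0,1,...,k} be a function with ρ(i) ≠ i for all i. Suppose ρ has exactly m pairwise disjoint cycles within {1,...,k}. Then the number of permutations σ ∈ S_k compatible with ρ is exactly 2^m; more precisely, the compatible permutations are in bijection with the subsets T of the set of cycles of ρ, where the permutation corresponding to T acts as the cyclic permutation ρ on the elements of the cycles in T and fixes all other elements of {1,...,k}. -/

import Mathlib

/-!
STATEMENT 5: Counting compatible permutations.

The domain `{1, ..., k}` of `ρ` is modeled by `Fin k` (`i : Fin k` is the paper index
`(i : ℕ) + 1`) and the codomain `{0, 1, ..., k}` by `Fin (k + 1)` (literal value), so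
`ρ(i) ≠ i` reads `(ρ i : ℕ) ≠ (i : ℕ) + 1`, and for `σ ∈ S_k`, "`σ(i) = ρ(i)`" reads
`(σ i : ℕ) + 1 = (ρ i : ℕ)`.  "`ρ` has exactly `m` pairwise disjoint cycles" is stated
as: there is a family `C : Fin m → Finset (Fin k)` of pairwise disjoint cycles of `ρ`
comprising every cycle of `ρ`.  The conclusion gives the count `2 ^ m` together with a
bijection `e` from subsets `T` of the set of cycles to the compatible permutations,
where `e T` acts as `ρ` on the elements of the cycles in `T` and fixes everything else.
-/

/-- `c` is (the underlying set of) a cycle of `ρ` within `{1, ..., k}`: there are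
`l ≥ 2` and distinct elements `i₁, ..., i_l` of `{1, ..., k}` with `ρ(i_j) = i_{j+1}`
cyclically, and `c = {i₁, ..., i_l}`. -/
def IsRhoCycle (k : ℕ) (ρ : Fin k → Fin (k + 1)) (c : Finset (Fin k)) : Prop :=
  ∃ (l : ℕ) (_ : 2 ≤ l) (g : Fin l → Fin k), Function.Injective g ∧
    (∀ j : Fin l,
      (ρ (g j) : ℕ) = (g ⟨((j : ℕ) + 1) % l, Nat.mod_lt _ (by omega)⟩ : ℕ) + 1) ∧
    c = Finset.image g Finset.univ

/-!
The cycles of a compatible permutation are again compatible, so they are cycles of `ρ`; conversely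
a product of disjoint cycles of `ρ` is compatible. Since `ρ` is single-valued, a compatible
permutation is determined by the set of points it moves, which is an arbitrary union of cycles.
Only the relation `ρ(i) = j` between `i, j ∈ {1, ..., k}` matters, so `ρ` is treated as a partial
function on `{1, ..., k}`, given by its graph.
-/

section IsCompatible

open Equiv Function

theorem biUnion_injective_of_pairwise_disjoint {ι α : Type*} [DecidableEq α] {C : ι → Finset α}
    (hdisj : Pairwise (Disjoint on C)) (hne : ∀ t, (C t).Nonempty) :
    Injective fun T : Finset ι => T.biUnion C := fun S T hST => by
  have hdisj_coe : Pairwise (Disjoint on fun t => (C t : Set α)) := fun _ _ hst =>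
    Finset.disjoint_coe.2 (hdisj hst)
  refine Finset.coe_injective (hdisj_coe.biUnion_injective hne ?_)
  simpa only [Finset.coe_biUnion] using congrArg ((↑) : Finset α → Set α) hST

variable {α : Type*} {r : α → α → Prop} {σ τ : Perm α}

/-- Compatibility of a permutation `σ` with the partial function `ρ` whose graph is `r`. A point
that `ρ` sends outside the domain of `σ` is encoded as a point related to nothing. -/
def IsCompatible (r : α → α → Prop) (σ : Perm α) : Prop :=
  ∀ i, σ i = i ∨ r i (σ i)

variable [Fintype α] [DecidableEq α] {c : Finset α}

theorem IsCompatible.eq_of_support_eq (hr : Relator.RightUnique r) (hσ : IsCompatible r σ)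
    (hτ : IsCompatible r τ) (h : σ.support = τ.support) : σ = τ := by
  ext i
  by_cases hi : i ∈ σ.support
  · exact hr ((hσ i).resolve_left (Perm.mem_support.1 hi))
      ((hτ i).resolve_left (Perm.mem_support.1 (h ▸ hi)))
  · rw [Perm.notMem_support.1 hi, Perm.notMem_support.1 (h ▸ hi)]

theorem isCompatible_iff_forall_mem_cycleFactorsFinset :
    IsCompatible r σ ↔ ∀ τ ∈ σ.cycleFactorsFinset, IsCompatible r τ := by
  refine ⟨fun hσ τ hτ i => ?_, fun h i => ?_⟩
  · refine (em (i ∈ τ.support)).symm.imp Perm.notMem_support.1 fun hi => ?_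
    have hτσ : τ i = σ i := (Perm.mem_cycleFactorsFinset_iff.1 hτ).2 i hi
    exact hτσ ▸ (hσ i).resolve_left (hτσ ▸ Perm.mem_support.1 hi)
  · by_cases hi : i ∈ σ.support
    · have hτ := Perm.cycleOf_mem_cycleFactorsFinset_iff.2 hi
      simpa only [Perm.cycleOf_apply_self] using h _ hτ i
    · exact .inl (Perm.notMem_support.1 hi)

/-- `c` is the underlying set of a directed cycle of length at least two in the graph of `r`,
encoded as the support of the permutation rotating that cycle. -/
def IsRelCycle (r : α → α → Prop) (c : Finset α) : Prop :=
  ∃ τ : Perm α, τ.IsCycle ∧ IsCompatible r τ ∧ τ.support = c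

theorem IsRelCycle.nonempty (h : IsRelCycle r c) : c.Nonempty := by
  obtain ⟨τ, hτ, -, rfl⟩ := h
  exact hτ.nonempty_support

theorem isRelCycle_image {l : ℕ} (hl : 2 ≤ l) {g : Fin l → α} (hg : Injective g)
    (hr : ∀ j : Fin l, r (g j) (g ⟨(j + 1) % l, Nat.mod_lt _ (by omega)⟩)) :
    IsRelCycle r (Finset.image g Finset.univ) := by
  have hnodup : (List.ofFn g).Nodup := List.nodup_ofFn.2 hg
  have hsupport : (List.ofFn g).formPerm.support = Finset.image g Finset.univ := by
    rw [List.support_formPerm_of_nodup _ hnodup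
      fun x hx => by simpa [hx] using hl.trans_eq (List.length_ofFn (f := g)).symm]
    ext
    simp [List.mem_ofFn]
  refine ⟨(List.ofFn g).formPerm, List.isCycle_formPerm hnodup (by simpa using hl), fun i => ?_,
    hsupport⟩
  by_cases hi : i ∈ (List.ofFn g).formPerm.support
  · rw [hsupport] at hi
    obtain ⟨j, -, rfl⟩ := Finset.mem_image.1 hi
    have happly := List.formPerm_apply_getElem _ hnodup j (by simp)
    simp only [List.getElem_ofFn, List.length_ofFn] at happly
    exact .inr (happly ▸ hr j)
  · exact .inl (Perm.notMem_support.1 hi)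

theorem IsRelCycle.exists_eq_image (h : IsRelCycle r c) :
    ∃ (l : ℕ) (_ : 2 ≤ l) (g : Fin l → α), Injective g ∧
      (∀ j : Fin l, r (g j) (g ⟨(j + 1) % l, Nat.mod_lt _ (by omega)⟩)) ∧
      c = Finset.image g Finset.univ := by
  obtain ⟨τ, hτ, hcomp, rfl⟩ := h
  obtain ⟨x, hx⟩ := hτ.nonempty_support
  have hperm : (τ.toList x).formPerm = τ := by
    rw [Perm.formPerm_toList, hτ.cycleOf_eq (Perm.mem_support.1 hx)]
  have hmem : ∀ y, y ∈ τ.toList x ↔ y ∈ τ.support := fun y => by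
    rw [Perm.mem_toList_iff]
    exact ⟨fun h => h.1.mem_support_iff.1 h.2, fun hy =>
      ⟨hτ.sameCycle (Perm.mem_support.1 hx) (Perm.mem_support.1 hy), hx⟩⟩
  have hnodup := Perm.nodup_toList τ x
  refine ⟨_, Perm.two_le_length_toList_iff_mem_support.2 hx, (τ.toList x).get,
    List.nodup_iff_injective_get.1 hnodup, fun j => ?_, ?_⟩
  · have happly := List.formPerm_apply_getElem _ hnodup j j.2
    rw [hperm] at happly
    have hrel := (hcomp _).resolve_left (Perm.mem_support.1 ((hmem _).1 (List.get_mem _ j)))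
    simpa only [List.get_eq_getElem, happly] using hrel
  · ext y
    simp [← hmem, List.mem_iff_get]

theorem IsCompatible.exists_isRelCycle_mem_subset (hσ : IsCompatible r σ) {i : α}
    (hi : i ∈ σ.support) : ∃ c, IsRelCycle r c ∧ i ∈ c ∧ c ⊆ σ.support := by
  obtain ⟨τ, hτ, hiτ⟩ := Perm.mem_support_iff_mem_support_of_mem_cycleFactorsFinset.1 hi
  exact ⟨τ.support, ⟨τ, (Perm.mem_cycleFactorsFinset_iff.1 hτ).1,
    isCompatible_iff_forall_mem_cycleFactorsFinset.1 hσ τ hτ, rfl⟩, hiτ,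
    Perm.mem_cycleFactorsFinset_support_le hτ⟩

variable {ι : Type*} {C : ι → Finset α}

theorem exists_isCompatible_support_eq_biUnion (hcyc : ∀ t, IsRelCycle r (C t))
    (hdisj : Pairwise (Disjoint on C)) (T : Finset ι) :
    ∃ σ : Perm α, IsCompatible r σ ∧ σ.support = T.biUnion C := by
  choose τ hτ hcomp hsupport using hcyc
  obtain ⟨σ, hσ⟩ : ∃ σ : Perm α, σ.cycleFactorsFinset = T.image τ := by
    refine ⟨_, Perm.cycleFactorsFinset_eq_finset.2 ⟨?_, ?_, rfl⟩⟩
    · exact Finset.forall_mem_image.2 fun t _ => hτ t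
    · rw [Finset.coe_image]
      rintro _ ⟨s, -, rfl⟩ _ ⟨t, -, rfl⟩ hst
      rw [Perm.disjoint_iff_disjoint_support, hsupport, hsupport]
      exact hdisj (ne_of_apply_ne τ hst)
  refine ⟨σ, isCompatible_iff_forall_mem_cycleFactorsFinset.2 ?_, ?_⟩
  · rw [hσ]
    exact Finset.forall_mem_image.2 fun t _ => hcomp t
  · ext i
    simp [Perm.mem_support_iff_mem_support_of_mem_cycleFactorsFinset (g := σ), hσ, hsupport,
      -Perm.mem_support]

theorem IsCompatible.exists_support_eq_biUnion (hσ : IsCompatible r σ)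
    (hall : ∀ c, IsRelCycle r c → ∃ t, c = C t) : ∃ T : Finset ι, σ.support = T.biUnion C := by
  classical
  have hcover : ∀ i : σ.support, ∃ t, i.1 ∈ C t ∧ C t ⊆ σ.support := fun i => by
    obtain ⟨c, hc, hic, hcσ⟩ := hσ.exists_isRelCycle_mem_subset i.2
    obtain ⟨t, rfl⟩ := hall c hc
    exact ⟨t, hic, hcσ⟩
  choose f hf hfσ using hcover
  refine ⟨Finset.univ.image f, Finset.Subset.antisymm (fun i hi => ?_) ?_⟩
  · exact Finset.mem_biUnion.2 ⟨f ⟨i, hi⟩, Finset.mem_image_of_mem f (Finset.mem_univ _), hf _⟩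
  · exact Finset.biUnion_subset.2 (Finset.forall_mem_image.2 fun i _ => hfσ i)

theorem exists_equiv_isCompatible (hr : Relator.RightUnique r)
    (hcyc : ∀ t, IsRelCycle r (C t)) (hdisj : Pairwise (Disjoint on C))
    (hall : ∀ c, IsRelCycle r c → ∃ t, c = C t) :
    ∃ e : Finset ι ≃ {σ : Perm α // IsCompatible r σ},
      ∀ T, (e T).1.support = T.biUnion C := by
  choose F hF hsupport using exists_isCompatible_support_eq_biUnion hcyc hdisj
  have hinj : Injective F := fun S T hST =>
    biUnion_injective_of_pairwise_disjoint hdisj (fun t => (hcyc t).nonempty)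
      (by simp only [← hsupport, hST])
  have hsurj : ∀ σ, IsCompatible r σ → ∃ T, F T = σ := fun σ hσ => by
    obtain ⟨T, hT⟩ := hσ.exists_support_eq_biUnion hall
    exact ⟨T, (hF T).eq_of_support_eq hr hσ ((hsupport T).trans hT.symm)⟩
  exact ⟨Equiv.ofBijective (fun T => ⟨F T, hF T⟩) ⟨fun S T h => hinj (congrArg Subtype.val h),
    fun σ => (hsurj σ σ.2).imp fun T => Subtype.ext⟩, hsupport⟩

theorem compatible_count_general [Fintype ι] [∀ (T : Finset ι) i, Decidable (∃ t ∈ T, i ∈ C t)]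
    (hr : Relator.RightUnique r) (hcyc : ∀ t, IsRelCycle r (C t))
    (hdisj : Pairwise (Disjoint on C))
    (hall : ∀ c, IsRelCycle r c → ∃ t, c = C t) :
    Nat.card {σ : Perm α // IsCompatible r σ} = 2 ^ Fintype.card ι ∧
      ∃ e : Finset ι ≃ {σ : Perm α // IsCompatible r σ},
        ∀ T i, if ∃ t ∈ T, i ∈ C t then r i ((e T).1 i) else (e T).1 i = i := by
  obtain ⟨e, he⟩ := exists_equiv_isCompatible hr hcyc hdisj hall
  refine ⟨?_, e, fun T i => ?_⟩
  · rw [← Nat.card_congr e, Nat.card_eq_fintype_card, Fintype.card_finset]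
  · have hmem : (∃ t ∈ T, i ∈ C t) ↔ (e T).1 i ≠ i := by
      rw [← Finset.mem_biUnion, ← he, Perm.mem_support]
    split_ifs with hi
    · exact ((e T).2 i).resolve_left (hmem.1 hi)
    · exact not_not.1 (mt hmem.2 hi)

end IsCompatible

theorem rightUnique_val_add_one_eq {k : ℕ} (ρ : Fin k → Fin (k + 1)) :
    Relator.RightUnique fun i j : Fin k => (j : ℕ) + 1 = (ρ i : ℕ) :=
  fun _ _ _ hj hj' => Fin.ext (Nat.succ_injective (hj.trans hj'.symm))

theorem isRhoCycle_iff_isRelCycle {k : ℕ} {ρ : Fin k → Fin (k + 1)} {c : Finset (Fin k)} :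
    IsRhoCycle k ρ c ↔ IsRelCycle (fun i j : Fin k => (j : ℕ) + 1 = (ρ i : ℕ)) c := by
  constructor
  · rintro ⟨l, hl, g, hg, hρ, rfl⟩
    exact isRelCycle_image hl hg fun j => (hρ j).symm
  · intro h
    obtain ⟨l, hl, g, hg, hr, hc⟩ := h.exists_eq_image
    exact ⟨l, hl, g, hg, fun j => (hr j).symm, hc⟩

theorem compatible_count (k m : ℕ) (hk : 1 ≤ k) (ρ : Fin k → Fin (k + 1))
    (hρ : ∀ i : Fin k, (ρ i : ℕ) ≠ (i : ℕ) + 1)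
    (C : Fin m → Finset (Fin k))
    (hcyc : ∀ t : Fin m, IsRhoCycle k ρ (C t))
    (hdisj : ∀ s t : Fin m, s ≠ t → Disjoint (C s) (C t))
    (hall : ∀ c : Finset (Fin k), IsRhoCycle k ρ c → ∃ t : Fin m, c = C t) :
    (Finset.univ.filter (fun σ : Equiv.Perm (Fin k) =>
        ∀ i : Fin k, σ i = i ∨ (σ i : ℕ) + 1 = (ρ i : ℕ))).card = 2 ^ m ∧
    ∃ e : Finset (Fin m) ≃
        {σ : Equiv.Perm (Fin k) // ∀ i : Fin k, σ i = i ∨ (σ i : ℕ) + 1 = (ρ i : ℕ)},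
      ∀ (T : Finset (Fin m)) (i : Fin k),
        if ∃ t ∈ T, i ∈ C t then ((e T).1 i : ℕ) + 1 = (ρ i : ℕ)
        else (e T).1 i = i := by
  refine (compatible_count_general (rightUnique_val_add_one_eq ρ)
    (fun t => isRhoCycle_iff_isRelCycle.1 (hcyc t)) (fun s t => hdisj s t)
    (fun c hc => hall c (isRhoCycle_iff_isRelCycle.2 hc))).imp_left fun hcard => ?_
  rw [← Fintype.card_subtype, ← Nat.card_eq_fintype_card]
  exact hcard.trans (by rw [Fintype.card_fin])
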